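/- Let K_m^1 denote the complete-with-1-pendant ordered graph on m+1 vertices: vertex set {1,...,m+1}, with all edges among {2,...,m+1} together with the edge {1,2}. For all m, n ≥ 2, the off-diagonal ordered Ramsey number satisfies r_<(K_m^1, K_n^1) = R(m,n) + m + n − 1, where R(m,n) is the classical Ramsey number. -/

import Mathlib

/-- A 2-coloring `c` of the edges of the complete graph on the ordered vertex set
`{1,…,N}` contains an ordered copy, in color `b`, of the ordered graph with vertex
set `{1,…,n}` and edge set `E` (edges listed as pairs `(i, j)` with `i < j`):
there is a strictly increasing map `φ : {1,…,n} → {1,…,N}` such that every edge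
`(i, j) ∈ E` has `(φ i, φ j)` colored `b`. -/
def ContainsOrderedCopy (n N : ℕ) (E : Finset (ℕ × ℕ)) (c : ℕ → ℕ → Bool) (b : Bool) :
    Prop :=
  ∃ φ : ℕ → ℕ,
    (∀ i, 1 ≤ i → i ≤ n → 1 ≤ φ i ∧ φ i ≤ N) ∧
    (∀ i j, 1 ≤ i → i < j → j ≤ n → φ i < φ j) ∧
    (∀ e ∈ E, c (φ e.1) (φ e.2) = b)

/-- A 2-coloring `c` of the edges of the complete graph on `{1,…,N}` contains a
monochromatic ordered copy of the ordered graph with vertex set `{1,…,n}` and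
edge set `E`. -/
def ContainsMonoOrderedCopy (n N : ℕ) (E : Finset (ℕ × ℕ)) (c : ℕ → ℕ → Bool) : Prop :=
  ∃ b : Bool, ContainsOrderedCopy n N E c b

/-- The classical Ramsey number `R(m, n)`: the least `N` such that every red/blue
coloring of the edges of the complete graph on `{1,…,N}` contains a red complete
subgraph on `m` vertices or a blue complete subgraph on `n` vertices.
(`c i j = true` means edge `(i, j)` (with `i < j`) is red, `false` means blue.) -/
noncomputable def classicalRamsey (m n : ℕ) : ℕ :=
  sInf {N : ℕ | ∀ c : ℕ → ℕ → Bool,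
    (∃ S : Finset ℕ, S ⊆ Finset.Icc 1 N ∧ S.card = m ∧
      ∀ i ∈ S, ∀ j ∈ S, i < j → c i j = true) ∨
    (∃ S : Finset ℕ, S ⊆ Finset.Icc 1 N ∧ S.card = n ∧
      ∀ i ∈ S, ∀ j ∈ S, i < j → c i j = false)}

/-- The edge set of the complete-with-1-pendant ordered graph `K_m^1` on `m + 1`
vertices: all edges among `{2,…,m+1}` together with the edge `(1, 2)`. -/
def pendantEdges (m : ℕ) : Finset (ℕ × ℕ) :=
  insert (1, 2)
    (((Finset.Icc 2 (m + 1)) ×ˢ (Finset.Icc 2 (m + 1))).filter (fun p => p.1 < p.2))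

/-!
In a coloring of `{1,…,N}`, call a vertex `u ≥ 2` left-monochromatic of color `b` if all its edges
to smaller vertices have color `b`. If there are `m` left-monochromatic red vertices, they form a
red clique and vertex `1` serves as the pendant; likewise for `n` blue ones. Otherwise at least
`N - 1 - (m - 1) - (n - 1)` vertices have both a red and a blue edge to the left, so every
monochromatic clique among them extends to a pendant copy; for `N = R(m,n) + m + n - 1` there are
enough of them for the classical Ramsey theorem.

Conversely, put `m + n - 1` vertices in front of an extremal coloring for `R(m,n)`: the first `n`
are labeled blue, the next `m - 1` red. A prefix vertex has its label's color towards the left and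
the opposite color towards the extremal part. A pendant copy whose clique starts in the prefix then
has its whole clique among the prefix vertices labeled by its color, of which, vertex `1` excluded,
there are too few.
-/

/-- `S` spans a clique of color `b`, where the pair `i < j` is colored by `c i j`; values of `c` at
other pairs are ignored. -/
def IsMonoClique {α κ : Type*} [LT α] (c : α → α → κ) (b : κ) (S : Finset α) : Prop :=
  ∀ i ∈ S, ∀ j ∈ S, i < j → c i j = b

/-- Inside the vertex set `T`, the coloring `c` has a clique of `k` vertices in the color `b`. -/
def HasMonoClique {α κ : Type*} [LT α] (c : α → α → κ) (b : κ) (T : Finset α) (k : ℕ) : Prop :=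
  ∃ S : Finset α, S ⊆ T ∧ S.card = k ∧ IsMonoClique c b S

namespace HasMonoClique

variable {α β κ : Type*} {c : α → α → κ} {b : κ} {T U : Finset α} {k : ℕ}

theorem zero [LT α] (c : α → α → κ) (b : κ) (T : Finset α) : HasMonoClique c b T 0 :=
  ⟨∅, T.empty_subset, Finset.card_empty, by simp [IsMonoClique]⟩

theorem mono [LT α] (h : HasMonoClique c b U k) (hUT : U ⊆ T) : HasMonoClique c b T k :=
  let ⟨S, hSU, hcard, hS⟩ := h
  ⟨S, hSU.trans hUT, hcard, hS⟩

theorem cons [Preorder α] (h : HasMonoClique c b U k) {v : α} (hv : v ∈ T) (hUT : U ⊆ T)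
    (hvU : ∀ w ∈ U, v < w ∧ c v w = b) : HasMonoClique c b T (k + 1) := by
  classical
  obtain ⟨S, hSU, rfl, hS⟩ := h
  have hvS : v ∉ S := fun hvS => (hvU v (hSU hvS)).1.false
  refine ⟨insert v S, Finset.insert_subset hv (hSU.trans hUT),
    Finset.card_insert_of_notMem hvS, ?_⟩
  intro i hi j hj hij
  rcases Finset.mem_insert.1 hi with rfl | hiS <;> rcases Finset.mem_insert.1 hj with rfl | hjS
  · exact absurd hij (lt_irrefl _)
  · exact (hvU j (hSU hjS)).2
  · exact absurd hij (hvU i (hSU hiS)).1.not_gt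
  · exact hS i hiS j hjS hij

theorem map [LinearOrder α] [Preorder β] {d : β → β → κ} {T' : Finset β} {f : α → β}
    (h : HasMonoClique c b T k) (hf : StrictMonoOn f T) (hT : Set.MapsTo f T T')
    (hcd : ∀ i ∈ T, ∀ j ∈ T, i < j → c i j = d (f i) (f j)) : HasMonoClique d b T' k := by
  classical
  obtain ⟨S, hST, rfl, hS⟩ := h
  refine ⟨S.image f, Finset.image_subset_iff.2 fun i hi => hT (hST hi),
    Finset.card_image_of_injOn (hf.injOn.mono hST), ?_⟩
  simp only [IsMonoClique, Finset.forall_mem_image]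
  intro i hi j hj hij
  have hij' : i < j := (hf.lt_iff_lt (hST hi) (hST hj)).1 hij
  rw [← hcd i (hST hi) j (hST hj) hij', hS i hi j hj hij']

end HasMonoClique

theorem IsMonoClique.hasMonoClique {α κ : Type*} [LT α] {c : α → α → κ} {b : κ} {T : Finset α}
    {k : ℕ} (hT : IsMonoClique c b T) (hk : k ≤ T.card) : HasMonoClique c b T k :=
  let ⟨S, hST, hS⟩ := Finset.exists_subset_card_eq hk
  ⟨S, hST, hS, fun i hi j hj => hT i (hST hi) j (hST hj)⟩

theorem hasMonoClique_or_of_choose_le_card {α : Type*} [LinearOrder α] (c : α → α → Bool)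
    (m n : ℕ) (T : Finset α) (hT : (m + n).choose m ≤ T.card) :
    HasMonoClique c true T m ∨ HasMonoClique c false T n := by
  induction m generalizing n T with
  | zero => exact .inl (.zero c true T)
  | succ m ihm =>
    induction n generalizing T with
    | zero => exact .inr (.zero c false T)
    | succ n ihn =>
      have hne : T.Nonempty := Finset.card_pos.1 ((Nat.choose_pos (by omega)).trans_le hT)
      let v := T.min' hne
      have hv : v ∈ T := T.min'_mem hne
      let U (b : Bool) : Finset α := {w ∈ T.erase v | c v w = b}
      have hUT (b : Bool) : U b ⊆ T := (Finset.filter_subset _ _).trans (T.erase_subset v)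
      have hvU (b : Bool) : ∀ w ∈ U b, v < w ∧ c v w = b := by
        intro w hw
        obtain ⟨hw, hb⟩ := Finset.mem_filter.1 hw
        exact ⟨T.min'_lt_of_mem_erase_min' hne hw, hb⟩
      have hcard : (U true).card + (U false).card + 1 = T.card := by
        rw [← Finset.card_erase_add_one hv,
          ← Finset.card_filter_add_card_filter_not (s := T.erase v) (fun w => c v w = true)]
        simp only [U, Bool.not_eq_true]
      have hpascal : (m + 1 + (n + 1)).choose (m + 1)
          = (m + (n + 1)).choose m + (m + 1 + n).choose (m + 1) := by
        rw [show m + 1 + (n + 1) = m + (n + 1) + 1 by omega, Nat.choose_succ_succ,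
          show m + 1 + n = m + (n + 1) by omega]
      have hlarge : (m + (n + 1)).choose m ≤ (U true).card ∨
          (m + 1 + n).choose (m + 1) ≤ (U false).card := by omega
      rcases hlarge with hred | hblue
      · exact (ihm (n + 1) (U true) hred).imp (·.cons hv (hUT true) (hvU true)) (·.mono (hUT true))
      · exact (ihn (U false) hblue).imp (·.mono (hUT false)) (·.cons hv (hUT false) (hvU false))

theorem hasMonoClique_or_of_Icc_classicalRamsey (c : ℕ → ℕ → Bool) (m n : ℕ) :
    HasMonoClique c true (Finset.Icc 1 (classicalRamsey m n)) m ∨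
      HasMonoClique c false (Finset.Icc 1 (classicalRamsey m n)) n :=
  Nat.sInf_mem (s := {N | ∀ c : ℕ → ℕ → Bool, HasMonoClique c true (Finset.Icc 1 N) m ∨
      HasMonoClique c false (Finset.Icc 1 N) n})
    ⟨(m + n).choose m, fun c => hasMonoClique_or_of_choose_le_card c m n _ (by simp)⟩ c

theorem exists_coloring_of_lt_classicalRamsey {m n N : ℕ} (hN : N < classicalRamsey m n) :
    ∃ c : ℕ → ℕ → Bool, ¬ HasMonoClique c true (Finset.Icc 1 N) m ∧
      ¬ HasMonoClique c false (Finset.Icc 1 N) n := by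
  have hnot := Nat.notMem_of_lt_sInf hN
  contrapose! hnot
  exact fun c => or_iff_not_imp_left.2 (hnot c)

theorem classicalRamsey_pos {m n : ℕ} (hm : 0 < m) (hn : 0 < n) : 0 < classicalRamsey m n := by
  by_contra hzero
  have hempty : Finset.Icc 1 (classicalRamsey m n) = ∅ := Finset.Icc_eq_empty (by omega)
  rcases hasMonoClique_or_of_Icc_classicalRamsey (fun _ _ => true) m n with
    ⟨S, hS, rfl, -⟩ | ⟨S, hS, rfl, -⟩ <;>
  simp [Finset.subset_empty.1 (hempty ▸ hS)] at hm hn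

theorem exists_strictMonoOn_image_Icc_eq (T : Finset ℕ) :
    ∃ g : ℕ → ℕ, StrictMonoOn g (Set.Icc 1 T.card) ∧ g '' Set.Icc 1 T.card = T := by
  have hfin : (Set.ofPred (· ∈ T)).Finite := T.finite_toSet
  have hcard : hfin.toFinset.card = T.card := congrArg Finset.card (by ext; simp)
  have hshift : (fun i : ℕ => i - 1) '' Set.Icc 1 T.card = Set.Iio T.card := by
    ext i
    simp only [Set.mem_image, Set.mem_Icc, Set.mem_Iio]
    exact ⟨fun ⟨j, hj, hji⟩ => by omega, fun hi => ⟨i + 1, by omega, by omega⟩⟩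
  refine ⟨fun i => Nat.nth (· ∈ T) (i - 1), ?_, ?_⟩
  · intro i hi j hj hij
    simp only [Set.mem_Icc] at hi hj
    exact Nat.nth_lt_nth_of_lt_card hfin (by omega) (by omega)
  · rw [← Set.image_image (Nat.nth (· ∈ T)), hshift, ← hcard]
    exact Nat.image_nth_Iio_card hfin

theorem hasMonoClique_or_of_classicalRamsey_le_card (c : ℕ → ℕ → Bool) {m n : ℕ} {T : Finset ℕ}
    (hT : classicalRamsey m n ≤ T.card) : HasMonoClique c true T m ∨ HasMonoClique c false T n := by
  obtain ⟨g, hg, hgT⟩ := exists_strictMonoOn_image_Icc_eq T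
  have hsub : (Finset.Icc 1 (classicalRamsey m n) : Set ℕ) ⊆ Set.Icc 1 T.card := by
    simpa using Set.Icc_subset_Icc_right hT
  have hmaps : Set.MapsTo g (Finset.Icc 1 (classicalRamsey m n)) T := fun i hi =>
    hgT ▸ Set.mem_image_of_mem g (hsub hi)
  exact (hasMonoClique_or_of_Icc_classicalRamsey (fun i j => c (g i) (g j)) m n).imp
    (·.map (hg.mono hsub) hmaps fun _ _ _ _ _ => rfl)
    (·.map (hg.mono hsub) hmaps fun _ _ _ _ _ => rfl)

theorem mem_pendantEdges {m i j : ℕ} :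
    (i, j) ∈ pendantEdges m ↔ i = 1 ∧ j = 2 ∨ 2 ≤ i ∧ i < j ∧ j ≤ m + 1 := by
  simp only [pendantEdges, Finset.mem_insert, Prod.mk.injEq, Finset.mem_filter,
    Finset.mem_product, Finset.mem_Icc]
  omega

theorem exists_pendant_clique_of_containsOrderedCopy {m N : ℕ} {c : ℕ → ℕ → Bool} {b : Bool}
    (hm : 0 < m) (h : ContainsOrderedCopy (m + 1) N (pendantEdges m) c b) :
    ∃ S ⊆ Finset.Icc 2 N, S.card = m ∧ IsMonoClique c b S ∧
      ∃ u, IsLeast (S : Set ℕ) u ∧ ∃ v ∈ Finset.Ico 1 u, c v u = b := by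
  obtain ⟨φ, hmem, hlt, hedge⟩ := h
  have hφ : StrictMonoOn φ (Set.Icc 1 (m + 1)) := fun i hi j hj hij => hlt i j hi.1 hij hj.2
  have hsub : Set.Icc 2 (m + 1) ⊆ Set.Icc 1 (m + 1) := Set.Icc_subset_Icc_left (by omega)
  refine ⟨(Finset.Icc 2 (m + 1)).image φ, ?_, ?_, ?_, φ 2, ?_, φ 1, ?_, ?_⟩
  · simp only [Finset.image_subset_iff, Finset.mem_Icc]
    intro i hi
    have h1 := (hmem 1 le_rfl (by omega)).1
    have h1i := hlt 1 i le_rfl (by omega) hi.2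
    exact ⟨by omega, (hmem i (by omega) hi.2).2⟩
  · rw [Finset.card_image_of_injOn (by simpa using hφ.injOn.mono hsub), Nat.card_Icc]
    omega
  · simp only [IsMonoClique, Finset.forall_mem_image, Finset.mem_Icc]
    intro i hi j hj hij
    have hij' : i < j := (hφ.lt_iff_lt (hsub hi) (hsub hj)).1 hij
    exact hedge (i, j) (mem_pendantEdges.2 (.inr ⟨hi.1, hij', hj.2⟩))
  · rw [Finset.coe_image, Finset.coe_Icc]
    exact (hφ.monotoneOn.mono hsub).map_isLeast (isLeast_Icc (by omega))
  · exact Finset.mem_Ico.2 ⟨(hmem 1 le_rfl (by omega)).1, hlt 1 2 le_rfl one_lt_two (by omega)⟩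
  · exact hedge (1, 2) (mem_pendantEdges.2 (.inl ⟨rfl, rfl⟩))

theorem containsOrderedCopy_of_pendant_clique {N u v : ℕ} {c : ℕ → ℕ → Bool} {b : Bool}
    {S : Finset ℕ} (hSN : S ⊆ Finset.Icc 1 N) (hS : IsMonoClique c b S)
    (hu : IsLeast (S : Set ℕ) u) (hv : v ∈ Finset.Ico 1 u) (hvu : c v u = b) :
    ContainsOrderedCopy (S.card + 1) N (pendantEdges S.card) c b := by
  obtain ⟨g, hg, hgS⟩ := exists_strictMonoOn_image_Icc_eq S
  have hgmem {i : ℕ} (hi : i ∈ Set.Icc 1 S.card) : g i ∈ S := by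
    rw [← Finset.mem_coe, ← hgS]
    exact Set.mem_image_of_mem g hi
  have hcard : 1 ≤ S.card := Finset.card_pos.2 ⟨u, hu.1⟩
  have hg1 : g 1 = u :=
    (hgS ▸ hg.monotoneOn.map_isLeast (isLeast_Icc hcard)).unique hu
  obtain ⟨hv1, hvu_lt⟩ := Finset.mem_Ico.1 hv
  refine ⟨fun i => if i = 1 then v else g (i - 1), ?_, ?_, ?_⟩
  · intro i hi1 hi
    rcases hi1.eq_or_lt with rfl | hi1
    · exact ⟨hv1, hvu_lt.le.trans (Finset.mem_Icc.1 (hSN hu.1)).2⟩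
    · simp only [if_neg hi1.ne']
      exact Finset.mem_Icc.1 (hSN (hgmem ⟨by omega, by omega⟩))
  · intro i j hi1 hij hj
    simp only [if_neg (hi1.trans_lt hij).ne']
    rcases hi1.eq_or_lt with rfl | hi1
    · exact hvu_lt.trans_le (hu.2 (hgmem ⟨by omega, by omega⟩))
    · simp only [if_neg hi1.ne']
      exact hg ⟨by omega, by omega⟩ ⟨by omega, by omega⟩ (by omega)
  · rintro ⟨i, j⟩ hij
    rcases mem_pendantEdges.1 hij with ⟨rfl, rfl⟩ | ⟨hi, hij, hj⟩
    · simpa [hg1] using hvu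
    · have hi' : i - 1 ∈ Set.Icc 1 S.card := ⟨by omega, by omega⟩
      have hj' : j - 1 ∈ Set.Icc 1 S.card := ⟨by omega, by omega⟩
      simp only [if_neg (show i ≠ 1 by omega), if_neg (show j ≠ 1 by omega)]
      exact hS _ (hgmem hi') _ (hgmem hj') (hg hi' hj' (by omega))

theorem containsOrderedCopy_of_hasMonoClique {m N : ℕ} {c : ℕ → ℕ → Bool} {b : Bool}
    {T : Finset ℕ} (hm : 0 < m) (hTN : T ⊆ Finset.Icc 1 N)
    (hleft : ∀ u ∈ T, ∃ v ∈ Finset.Ico 1 u, c v u = b) (h : HasMonoClique c b T m) :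
    ContainsOrderedCopy (m + 1) N (pendantEdges m) c b := by
  obtain ⟨S, hST, rfl, hS⟩ := h
  have hu := S.isLeast_min' (Finset.card_pos.1 hm)
  obtain ⟨v, hv, hvu⟩ := hleft _ (hST hu.1)
  exact containsOrderedCopy_of_pendant_clique (hST.trans hTN) hS hu hv hvu

/-- The left-monochromatic vertices of color `b`: those of `{2,…,N}` all of whose edges to smaller
vertices have color `b`. Vertex `1`, for which this would hold vacuously, is left out. -/
def leftMonoVertices (c : ℕ → ℕ → Bool) (N : ℕ) (b : Bool) : Finset ℕ :=
  {u ∈ Finset.Icc 2 N | ∀ v < u, 1 ≤ v → c v u = b}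

theorem containsOrderedCopy_of_le_card_leftMonoVertices {m N : ℕ} {c : ℕ → ℕ → Bool} {b : Bool}
    (hm : 0 < m) (h : m ≤ (leftMonoVertices c N b).card) :
    ContainsOrderedCopy (m + 1) N (pendantEdges m) c b := by
  have hclique : IsMonoClique c b (leftMonoVertices c N b) := by
    intro i hi j hj hij
    have hi2 := (Finset.mem_Icc.1 (Finset.mem_filter.1 hi).1).1
    exact (Finset.mem_filter.1 hj).2 i hij (by omega)
  refine containsOrderedCopy_of_hasMonoClique hm ?_ ?_ (hclique.hasMonoClique h)
  · exact (Finset.filter_subset _ _).trans (Finset.Icc_subset_Icc_left one_le_two)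
  · intro u hu
    obtain ⟨huN, hub⟩ := Finset.mem_filter.1 hu
    have h1u : 1 < u := (Finset.mem_Icc.1 huN).1
    exact ⟨1, Finset.mem_Ico.2 ⟨le_rfl, h1u⟩, hub 1 h1u le_rfl⟩

theorem exists_left_edge_of_notMem_leftMonoVertices {N u : ℕ} {c : ℕ → ℕ → Bool} {b : Bool}
    (hu : u ∈ Finset.Icc 2 N) (h : u ∉ leftMonoVertices c N (!b)) :
    ∃ v ∈ Finset.Ico 1 u, c v u = b := by
  contrapose! h
  exact Finset.mem_filter.2 ⟨hu, fun v hvu hv => Bool.eq_not.2 (h v (Finset.mem_Ico.2 ⟨hv, hvu⟩))⟩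

theorem containsOrderedCopy_or_of_classicalRamsey_add_le {m n N : ℕ} (hm : 0 < m) (hn : 0 < n)
    (hN : classicalRamsey m n + m + n - 1 ≤ N) (c : ℕ → ℕ → Bool) :
    ContainsOrderedCopy (m + 1) N (pendantEdges m) c true ∨
      ContainsOrderedCopy (n + 1) N (pendantEdges n) c false := by
  let A := leftMonoVertices c N
  by_cases hred : m ≤ (A true).card
  · exact .inl (containsOrderedCopy_of_le_card_leftMonoVertices hm hred)
  by_cases hblue : n ≤ (A false).card
  · exact .inr (containsOrderedCopy_of_le_card_leftMonoVertices hn hblue)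
  let T := Finset.Icc 2 N \ (A true ∪ A false)
  have hT : classicalRamsey m n ≤ T.card := by
    have hdiff : (Finset.Icc 2 N).card - (A true ∪ A false).card ≤ T.card :=
      Finset.le_card_sdiff _ _
    have hunion := Finset.card_union_le (A true) (A false)
    rw [Nat.card_Icc] at hdiff
    omega
  have hTN : T ⊆ Finset.Icc 1 N :=
    Finset.sdiff_subset.trans (Finset.Icc_subset_Icc_left one_le_two)
  have hleft (b : Bool) : ∀ u ∈ T, ∃ v ∈ Finset.Ico 1 u, c v u = b := by
    intro u hu
    obtain ⟨huN, huA⟩ := Finset.mem_sdiff.1 hu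
    refine exists_left_edge_of_notMem_leftMonoVertices huN fun hub => huA ?_
    cases b
    · exact Finset.mem_union_left _ hub
    · exact Finset.mem_union_right _ hub
  exact (hasMonoClique_or_of_classicalRamsey_le_card c hT).imp
    (containsOrderedCopy_of_hasMonoClique hm hTN (hleft true))
    (containsOrderedCopy_of_hasMonoClique hn hTN (hleft false))

/-- The coloring `c`, shifted to the vertices above `K`, preceded by vertices `j ≤ K` whose edges
to the left have the color `label j` and whose edges to the vertices above `K` have the opposite
color. -/
def prefixColoring (K : ℕ) (label : ℕ → Bool) (c : ℕ → ℕ → Bool) (i j : ℕ) : Bool :=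
  if j ≤ K then label j else if i ≤ K then !label i else c (i - K) (j - K)

section prefixColoring

variable {K N m : ℕ} {label : ℕ → Bool} {c : ℕ → ℕ → Bool} {b : Bool}

theorem le_and_label_eq_of_isMonoClique_prefixColoring {S : Finset ℕ} {u v : ℕ}
    (hS : IsMonoClique (prefixColoring K label c) b S) (hu : IsLeast (S : Set ℕ) u) (huK : u ≤ K)
    (hvu : prefixColoring K label c v u = b) : ∀ x ∈ S, x ≤ K ∧ label x = b := by
  have hlabel : label u = b := by simpa only [prefixColoring, if_pos huK] using hvu
  intro x hx
  rcases (hu.2 hx).eq_or_lt with rfl | hux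
  · exact ⟨huK, hlabel⟩
  have hcol : prefixColoring K label c u x = b := hS u hu.1 x hx hux
  by_cases hxK : x ≤ K
  · exact ⟨hxK, by simpa only [prefixColoring, if_pos hxK] using hcol⟩
  · simp [prefixColoring, hxK, huK, hlabel] at hcol

theorem hasMonoClique_of_prefixColoring_Ioc
    (h : HasMonoClique (prefixColoring K label c) b (Finset.Ioc K N) m) :
    HasMonoClique c b (Finset.Icc 1 (N - K)) m := by
  refine h.map (f := (· - K)) ?_ ?_ ?_
  · intro i hi j hj hij
    simp only [Finset.coe_Ioc, Set.mem_Ioc] at hi hj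
    exact Nat.sub_lt_sub_right hi.1.le hij
  · intro i hi
    simp only [Finset.coe_Ioc, Set.mem_Ioc, Finset.coe_Icc, Set.mem_Icc] at hi ⊢
    omega
  · intro i hi j hj _
    rw [prefixColoring, if_neg (Finset.mem_Ioc.1 hj).1.not_ge,
      if_neg (Finset.mem_Ioc.1 hi).1.not_ge]

theorem hasMonoClique_of_containsOrderedCopy_prefixColoring
    (hlabel : {x ∈ Finset.Icc 2 K | label x = b}.card < m)
    (h : ContainsOrderedCopy (m + 1) N (pendantEdges m) (prefixColoring K label c) b) :
    HasMonoClique c b (Finset.Icc 1 (N - K)) m := by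
  obtain ⟨S, hSN, rfl, hS, u, hu, v, -, hvu⟩ :=
    exists_pendant_clique_of_containsOrderedCopy ((Nat.zero_le _).trans_lt hlabel) h
  have huK : K < u := by
    by_contra! huK
    refine hlabel.not_ge (Finset.card_le_card fun x hx => Finset.mem_filter.2 ?_)
    obtain ⟨hxK, hxb⟩ := le_and_label_eq_of_isMonoClique_prefixColoring hS hu huK hvu x hx
    exact ⟨Finset.mem_Icc.2 ⟨(Finset.mem_Icc.1 (hSN hx)).1, hxK⟩, hxb⟩
  refine hasMonoClique_of_prefixColoring_Ioc ⟨S, fun x hx => ?_, rfl, hS⟩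
  exact Finset.mem_Ioc.2 ⟨huK.trans_le (hu.2 hx), (Finset.mem_Icc.1 (hSN hx)).2⟩

end prefixColoring

theorem classicalRamsey_add_le_of_containsOrderedCopy_or {m n N : ℕ} (hm : 0 < m) (hn : 0 < n)
    (hN : ∀ c : ℕ → ℕ → Bool, ContainsOrderedCopy (m + 1) N (pendantEdges m) c true ∨
      ContainsOrderedCopy (n + 1) N (pendantEdges n) c false) :
    classicalRamsey m n + m + n - 1 ≤ N := by
  by_contra! hlt
  let K := m + n - 1
  have hNK : N - K < classicalRamsey m n := by
    have := classicalRamsey_pos hm hn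
    omega
  obtain ⟨c, hred, hblue⟩ := exists_coloring_of_lt_classicalRamsey hNK
  let label (x : ℕ) : Bool := decide (n < x)
  have hcard_red : {x ∈ Finset.Icc 2 K | label x = true}.card < m := by
    calc
      {x ∈ Finset.Icc 2 K | label x = true}.card ≤ (Finset.Ioc n K).card :=
        Finset.card_le_card fun x hx => by
          simp only [label, Finset.mem_filter, Finset.mem_Icc, decide_eq_true_eq] at hx
          exact Finset.mem_Ioc.2 ⟨hx.2, hx.1.2⟩
      _ < m := by rw [Nat.card_Ioc]; omega
  have hcard_blue : {x ∈ Finset.Icc 2 K | label x = false}.card < n := by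
    calc
      {x ∈ Finset.Icc 2 K | label x = false}.card ≤ (Finset.Icc 2 n).card :=
        Finset.card_le_card fun x hx => by
          simp only [label, Finset.mem_filter, Finset.mem_Icc, decide_eq_false_iff_not] at hx
          exact Finset.mem_Icc.2 ⟨hx.1.1, not_lt.1 hx.2⟩
      _ < n := by rw [Nat.card_Icc]; omega
  rcases hN (prefixColoring K label c) with h | h
  · exact hred (hasMonoClique_of_containsOrderedCopy_prefixColoring hcard_red h)
  · exact hblue (hasMonoClique_of_containsOrderedCopy_prefixColoring hcard_blue h)

/-- For all `m, n ≥ 2`, the off-diagonal ordered Ramsey number of the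
complete-with-1-pendant graphs satisfies `r_<(K_m^1, K_n^1) = R(m,n) + m + n - 1`. -/
theorem orderedRamsey_pendant_eq (m n : ℕ) (hm : 2 ≤ m) (hn : 2 ≤ n) :
    IsLeast {N : ℕ | ∀ c : ℕ → ℕ → Bool,
      ContainsOrderedCopy (m + 1) N (pendantEdges m) c true ∨
      ContainsOrderedCopy (n + 1) N (pendantEdges n) c false}
      (classicalRamsey m n + m + n - 1) := by
  exact ⟨containsOrderedCopy_or_of_classicalRamsey_add_le (by omega) (by omega) le_rfl,
    fun _ => classicalRamsey_add_le_of_containsOrderedCopy_or (by omega) (by omega)⟩
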